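/- Pointwise uniqueness for jointly C-compatible solutions is equivalent to pointwise uniqueness in S_{Γ,C,ν}: if for every triple (X1, X2, Y) on a common probability space with μ_{X1,Y}, μ_{X2,Y} ∈ S_{Γ,C,ν} and (X1,X2) jointly C-compatible with Y one has X1 = X2 a.s., then the same conclusion holds for every triple (X1,X2,Y) with μ_{X1,Y}, μ_{X2,Y} ∈ S_{Γ,C,ν} (without assuming joint compatibility), and conversely. -/

import Mathlib

open MeasureTheory ProbabilityTheory MeasurableSpace

/-- `X` is `C`-compatible with `Y` (at every index `α`). -/
def CompatiblePair {S1 S2 Ω A : Type} [mS1 : MeasurableSpace S1] [mS2 : MeasurableSpace S2]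
    [MeasurableSpace Ω] (P : Measure Ω)
    (B1 : A → MeasurableSpace S1) (B2 : A → MeasurableSpace S2)
    (X : Ω → S1) (Y : Ω → S2) : Prop :=
  ∀ (α : A) (h : S2 → ℝ), Measurable h → (∃ C, ∀ x, |h x| ≤ C) →
    P[fun ω => h (Y ω)|MeasurableSpace.comap X (B1 α) ⊔ MeasurableSpace.comap Y (B2 α)]
      =ᵐ[P] P[fun ω => h (Y ω)|MeasurableSpace.comap Y (B2 α)]

/-- `(X1, X2)` are jointly `C`-compatible with `Y`. -/
def JointlyCompatible {S1 S2 Ω A : Type} [mS1 : MeasurableSpace S1] [mS2 : MeasurableSpace S2]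
    [MeasurableSpace Ω] (P : Measure Ω)
    (B1 : A → MeasurableSpace S1) (B2 : A → MeasurableSpace S2)
    (X1 X2 : Ω → S1) (Y : Ω → S2) : Prop :=
  ∀ (α : A) (h : S2 → ℝ), Measurable h → (∃ C, ∀ x, |h x| ≤ C) →
    P[fun ω => h (Y ω)|MeasurableSpace.comap X1 (B1 α) ⊔ MeasurableSpace.comap X2 (B1 α)
        ⊔ MeasurableSpace.comap Y (B2 α)]
      =ᵐ[P] P[fun ω => h (Y ω)|MeasurableSpace.comap Y (B2 α)]

/-!
Compatibility of `X` with `Y` depends only on the conditional law `κ` of `X` given `Y`: it says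
that `y ↦ κ y E` is, up to null sets, `B2 α`-measurable for every `E` in `B1 α`. For the direct
implication, self-adjointness of conditional expectation moves the conditioning from `y ↦ κ y E`
onto an indicator function of `Y`, to which compatibility applies.

This condition passes to products of kernels. Hence, if `κ₁` and `κ₂` are the conditional laws of
two solutions `X1` and `X2` given `Y`, the coupling in which the two solutions are conditionally
independent given `Y` is jointly compatible. It plays the role of the representation `G₁(Y, ξ₁)`,
`G₂(Y, ξ₂)` with independent `ξ₁`, `ξ₂`. Uniqueness among jointly compatible solutions then forces
`κ₁ y ⊗ κ₂ y` to live on the diagonal for almost every `y`, so that both are the same point mass;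
therefore `X1` and `X2` agree almost surely under any coupling over `Y`.
-/

section CondExp

variable {Ω T U F : Type*} {m mΩ : MeasurableSpace Ω} {P : Measure Ω} [IsFiniteMeasure P]
  [NormedAddCommGroup F] [NormedSpace ℝ F] [CompleteSpace F]

theorem condExp_comp_ae_eq {m mT : MeasurableSpace T} (hm : m ≤ mT) {Y : Ω → T}
    (hY : Measurable Y) {f : T → F} (hf : Integrable f (P.map Y)) :
    P[f ∘ Y | m.comap Y] =ᵐ[P] (P.map Y)[f | m] ∘ Y := by
  have hle : m.comap Y ≤ mΩ := (comap_mono hm).trans hY.comap_le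
  have hInt : Integrable ((P.map Y)[f | m] ∘ Y) P := integrable_condExp.comp_measurable hY
  refine (ae_eq_condExp_of_forall_setIntegral_eq hle (hf.comp_measurable hY)
    (fun _ _ _ => hInt.integrableOn) ?_ ?_).symm
  · rintro _ ⟨D, hD, rfl⟩ -
    simp only [Function.comp_apply]
    rw [← setIntegral_map (hm D hD) integrable_condExp.aestronglyMeasurable hY.aemeasurable,
      ← setIntegral_map (hm D hD) hf.aestronglyMeasurable hY.aemeasurable,
      setIntegral_condExp hm hf hD]
  · exact (stronglyMeasurable_condExp.comp_measurable (comap_measurable Y)).aestronglyMeasurable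

theorem setIntegral_condExp_eq_integral_mul_condExp_indicator (hm : m ≤ mΩ)
    {f : Ω → ℝ} (hf : Integrable f P) {D : Set Ω} (hD : MeasurableSet D) :
    ∫ ω in D, P[f | m] ω ∂P = ∫ ω, f ω * P[D.indicator (1 : Ω → ℝ) | m] ω ∂P := by
  set g : Ω → ℝ := D.indicator 1
  have hg : Integrable g P := (integrable_const 1).indicator hD
  have hcondExp_mul : P[f | m] * g = D.indicator P[f | m] := by
    ext ω
    by_cases hω : ω ∈ D <;> simp [g, hω]
  have hInt : Integrable (P[f | m] * g) P := hcondExp_mul ▸ integrable_condExp.indicator hD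
  have hbdd : ∀ᵐ ω ∂P, ‖P[g | m] ω‖ ≤ 1 :=
    ae_bdd_abs_condExp_of_ae_bdd_abs (R := 1) (.of_forall fun ω => by
      by_cases hω : ω ∈ D <;> simp [g, hω])
  have hInt' : Integrable (f * P[g | m]) P :=
    hf.mul_bdd integrable_condExp.aestronglyMeasurable hbdd
  calc ∫ ω in D, P[f | m] ω ∂P
    _ = ∫ ω, (P[f | m] * g) ω ∂P := by rw [hcondExp_mul, integral_indicator hD]
    _ = ∫ ω, (P[P[f | m] * g | m]) ω ∂P := (integral_condExp hm).symm
    _ = ∫ ω, (P[f | m] * P[g | m]) ω ∂P :=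
      integral_congr_ae (condExp_mul_of_stronglyMeasurable_left stronglyMeasurable_condExp hInt hg)
    _ = ∫ ω, (P[f * P[g | m] | m]) ω ∂P :=
      integral_congr_ae
        (condExp_mul_of_stronglyMeasurable_right stronglyMeasurable_condExp hInt' hf).symm
    _ = ∫ ω, (f * P[g | m]) ω ∂P := integral_condExp hm

theorem ae_eq_condExp_generateFrom (hm : m ≤ mΩ) {C : Set (Set Ω)}
    (hmC : m = generateFrom C) (hC : IsPiSystem C) (huniv : Set.univ ∈ C) {f g : Ω → F}
    (hf : Integrable f P) (hg : Integrable g P) (hgm : AEStronglyMeasurable[m] g P)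
    (heq : ∀ s ∈ C, ∫ ω in s, g ω ∂P = ∫ ω in s, f ω ∂P) :
    g =ᵐ[P] P[f | m] := by
  suffices hset : ∀ s, MeasurableSet[m] s → ∫ ω in s, g ω ∂P = ∫ ω in s, f ω ∂P from
    ae_eq_condExp_of_forall_setIntegral_eq hm hf (fun _ _ _ => hg.integrableOn)
      (fun s hs _ => hset s hs) hgm
  intro s hs
  induction s, hs using induction_on_inter hmC hC with
  | empty => simp
  | basic s hs => exact heq s hs
  | compl s hs ih =>
    have htotal : ∫ ω, g ω ∂P = ∫ ω, f ω ∂P := by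
      simpa only [setIntegral_univ] using heq _ huniv
    rw [setIntegral_compl (hm s hs) hg, setIntegral_compl (hm s hs) hf, ih, htotal]
  | iUnion s hd hs ih =>
    rw [integral_iUnion (fun i => hm _ (hs i)) hd hg.integrableOn,
      integral_iUnion (fun i => hm _ (hs i)) hd hf.integrableOn]
    exact tsum_congr ih

theorem ae_eq_condExp_comap_sup_comap {m' : MeasurableSpace U} {m : MeasurableSpace T}
    {X : Ω → U} {Y : Ω → T} (hX : m'.comap X ≤ mΩ) (hY : m.comap Y ≤ mΩ) {f g : Ω → F}
    (hf : Integrable f P) (hg : Integrable g P)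
    (hgm : AEStronglyMeasurable[m'.comap X ⊔ m.comap Y] g P)
    (heq : ∀ E D, MeasurableSet[m'] E → MeasurableSet[m] D →
      ∫ ω in X ⁻¹' E ∩ Y ⁻¹' D, g ω ∂P = ∫ ω in X ⁻¹' E ∩ Y ⁻¹' D, f ω ∂P) :
    g =ᵐ[P] P[f | m'.comap X ⊔ m.comap Y] := by
  refine ae_eq_condExp_generateFrom (sup_le hX hY)
    (C := {s | ∃ R ∈ Set.image2 (· ×ˢ ·) {E | MeasurableSet[m'] E} {D | MeasurableSet[m] D},
      (fun ω => (X ω, Y ω)) ⁻¹' R = s}) ?_ (isPiSystem_prod.comap _) ?_ hf hg hgm ?_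
  · rw [← comap_prodMk]
    exact (congrArg _ generateFrom_prod.symm).trans (comap_generateFrom)
  · exact ⟨_, ⟨Set.univ, .univ, Set.univ, .univ, rfl⟩, by simp⟩
  · rintro _ ⟨_, ⟨E, hE, D, hD, rfl⟩, rfl⟩
    simpa only [Set.mk_preimage_prod] using heq E D hE hD

end CondExp

section AdaptedKernel

/-- The kernel `κ` is adapted, up to `ν`-null sets, to the sub-σ-algebras `m` of its source and `m'`
of its target. When `κ` is the conditional law of `X` given `Y`, this is the condition on `κ` to
which compatibility of `X` with `Y` at one index reduces. `AEStronglyMeasurable` is used because,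
unlike `AEMeasurable`, it allows `m` to differ from the σ-algebra on which `ν` is defined. -/
def IsAEAdaptedKernel {T U : Type*} (m : MeasurableSpace T) (m' : MeasurableSpace U)
    {_ : MeasurableSpace T} {_ : MeasurableSpace U} (κ : Kernel T U) (ν : Measure T) : Prop :=
  ∀ E, MeasurableSet[m'] E → AEStronglyMeasurable[m] (fun y => κ y E) ν

namespace IsAEAdaptedKernel

variable {T U V : Type*} {m mT : MeasurableSpace T} {m' mU : MeasurableSpace U}
  {m'' mV : MeasurableSpace V} {κ : Kernel T U} {η : Kernel T V} {ν : Measure T}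

theorem aestronglyMeasurable_measureReal (h : IsAEAdaptedKernel m m' κ ν) {E : Set U}
    (hE : MeasurableSet[m'] E) : AEStronglyMeasurable[m] (fun y => (κ y).real E) ν := by
  obtain ⟨g, hg, hκg⟩ := h E hE
  exact ⟨fun y => (g y).toReal, hg.measurable.ennreal_toReal.stronglyMeasurable,
    hκg.fun_comp ENNReal.toReal⟩

theorem of_generateFrom [IsMarkovKernel κ] {C : Set (Set U)} (hm' : m' ≤ mU)
    (hmC : m' = generateFrom C) (hC : IsPiSystem C)
    (h : ∀ E ∈ C, AEStronglyMeasurable[m] (fun y => κ y E) ν) :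
    IsAEAdaptedKernel m m' κ ν := by
  intro E hE
  induction E, hE using induction_on_inter hmC hC with
  | empty => simpa only [measure_empty] using aestronglyMeasurable_const
  | basic E hE => exact h E hE
  | compl E hE ih =>
    obtain ⟨g, hg, hκg⟩ := ih
    refine ⟨fun y => 1 - g y, (hg.measurable.const_sub 1).stronglyMeasurable, ?_⟩
    filter_upwards [hκg] with y hy
    rw [prob_compl_eq_one_sub (hm' E hE), hy]
  | iUnion E hd hE ih =>
    choose g hg hκg using ih
    have htsum : Measurable[m] fun y => ∑' i, g i y := by
      simp only [ENNReal.tsum_eq_iSup_sum]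
      exact .iSup fun s => Finset.measurable_fun_sum s fun i _ => (hg i).measurable
    refine ⟨_, htsum.stronglyMeasurable, ?_⟩
    filter_upwards [ae_all_iff.2 hκg] with y hy
    rw [measure_iUnion hd fun i => hm' _ (hE i)]
    exact tsum_congr hy

theorem prod [IsMarkovKernel κ] [IsMarkovKernel η] (hm' : m' ≤ mU) (hm'' : m'' ≤ mV)
    (hκ : IsAEAdaptedKernel m m' κ ν) (hη : IsAEAdaptedKernel m m'' η ν) :
    IsAEAdaptedKernel m (m'.prod m'') (κ ×ₖ η) ν := by
  refine of_generateFrom (sup_le_sup (comap_mono hm') (comap_mono hm''))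
    (@generateFrom_prod _ _ m' m'').symm (@isPiSystem_prod _ _ m' m'') ?_
  rintro _ ⟨E, hE : MeasurableSet[m'] E, E', hE' : MeasurableSet[m''] E', rfl⟩
  obtain ⟨f, hf, hκf⟩ := hκ E hE
  obtain ⟨g, hg, hηg⟩ := hη E' hE'
  simp only [Kernel.prod_apply_prod]
  exact ⟨f * g, (hf.measurable.mul hg.measurable).stronglyMeasurable, hκf.mul hηg⟩

end IsAEAdaptedKernel

end AdaptedKernel

section ConditionalLaw

variable {Ω T U : Type*} {mΩ : MeasurableSpace Ω} {m mT : MeasurableSpace T}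
  {m' mU : MeasurableSpace U} {P : Measure Ω} [IsFiniteMeasure P]
  {X : Ω → U} {Y : Ω → T} {κ : Kernel T U} [IsMarkovKernel κ]

theorem integrable_measureReal_mul {ν : Measure T} {E : Set U} (hE : MeasurableSet E) {k : T → ℝ}
    (hk : Integrable k ν) : Integrable (fun y => (κ y).real E * k y) ν :=
  hk.bdd_mul (c := 1) (κ.measurable_coe hE).ennreal_toReal.aestronglyMeasurable
    (.of_forall fun y => by
      rw [Real.norm_of_nonneg measureReal_nonneg]
      exact measureReal_le_one)

theorem setIntegral_comp_of_hasCondDistrib (h : HasCondDistrib X Y κ P) {E : Set U} {D : Set T}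
    (hE : MeasurableSet E) (hD : MeasurableSet D) {k : T → ℝ} (hk : Integrable k (P.map Y)) :
    ∫ ω in X ⁻¹' E ∩ Y ⁻¹' D, k (Y ω) ∂P = ∫ y in D, (κ y).real E * k y ∂(P.map Y) := by
  have hk' : Integrable (fun p : T × U => k p.1) (P.map Y ⊗ₘ κ) := by
    refine Integrable.comp_measurable ?_ measurable_fst
    rwa [← Measure.fst, Measure.fst_compProd]
  calc ∫ ω in X ⁻¹' E ∩ Y ⁻¹' D, k (Y ω) ∂P
    _ = ∫ p in D ×ˢ E, k p.1 ∂(P.map Y ⊗ₘ κ) := by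
      rw [← h.map_eq] at hk' ⊢
      rw [setIntegral_map (hD.prod hE) hk'.aestronglyMeasurable h.aemeasurable,
        Set.mk_preimage_prod, Set.inter_comm]
    _ = ∫ y in D, (κ y).real E * k y ∂(P.map Y) := by
      rw [Measure.setIntegral_compProd hD hE hk'.integrableOn]
      simp only [setIntegral_const, smul_eq_mul]

theorem condExp_measureReal_ae_eq_of_condExp_indicator (hm : m ≤ mT) (hm' : m' ≤ mU)
    (hX : Measurable X) (hY : Measurable Y) (hκ : HasCondDistrib X Y κ P)
    (h : ∀ D, MeasurableSet D →
      P[D.indicator (1 : T → ℝ) ∘ Y | m'.comap X ⊔ m.comap Y]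
        =ᵐ[P] P[D.indicator (1 : T → ℝ) ∘ Y | m.comap Y])
    {E : Set U} (hE : MeasurableSet[m'] E) :
    (P.map Y)[fun y => (κ y).real E | m] =ᵐ[P.map Y] fun y => (κ y).real E := by
  have hE' : MeasurableSet E := hm' E hE
  have hκE : Integrable (fun y => (κ y).real E) (P.map Y) := by
    simpa only [mul_one] using integrable_measureReal_mul hE' (integrable_const (1 : ℝ))
  refine integrable_condExp.ae_eq_of_forall_setIntegral_eq _ _ hκE fun D hD _ => ?_
  have hInt : Integrable (D.indicator (1 : T → ℝ)) (P.map Y) := (integrable_const 1).indicator hD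
  calc ∫ y in D, (P.map Y)[fun y => (κ y).real E | m] y ∂(P.map Y)
    _ = ∫ y, (κ y).real E * (P.map Y)[D.indicator (1 : T → ℝ) | m] y ∂(P.map Y) :=
      setIntegral_condExp_eq_integral_mul_condExp_indicator hm hκE hD
    _ = ∫ ω in X ⁻¹' E, (P.map Y)[D.indicator (1 : T → ℝ) | m] (Y ω) ∂P := by
      simpa only [Set.preimage_univ, Set.inter_univ, setIntegral_univ] using
        (setIntegral_comp_of_hasCondDistrib hκ hE' .univ integrable_condExp).symm
    _ = ∫ ω in X ⁻¹' E, P[D.indicator (1 : T → ℝ) ∘ Y | m'.comap X ⊔ m.comap Y] ω ∂P :=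
      integral_congr_ae
        (ae_restrict_of_ae ((condExp_comp_ae_eq hm hY hInt).symm.trans (h D hD).symm))
    _ = ∫ ω in X ⁻¹' E, (Y ⁻¹' D).indicator 1 ω ∂P :=
      setIntegral_condExp (sup_le ((comap_mono hm').trans hX.comap_le)
        ((comap_mono hm).trans hY.comap_le)) (hInt.comp_measurable hY)
        ((le_sup_left : m'.comap X ≤ _) _ ⟨E, hE, rfl⟩)
    _ = ∫ ω in X ⁻¹' E ∩ Y ⁻¹' D, 1 ∂P := setIntegral_indicator (hY hD)
    _ = ∫ y in D, (κ y).real E ∂(P.map Y) := by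
      simpa only [mul_one] using
        setIntegral_comp_of_hasCondDistrib hκ hE' hD (integrable_const (1 : ℝ))

theorem isAEAdaptedKernel_of_condExp_indicator (hm : m ≤ mT) (hm' : m' ≤ mU)
    (hX : Measurable X) (hY : Measurable Y) (hκ : HasCondDistrib X Y κ P)
    (h : ∀ D, MeasurableSet D →
      P[D.indicator (1 : T → ℝ) ∘ Y | m'.comap X ⊔ m.comap Y]
        =ᵐ[P] P[D.indicator (1 : T → ℝ) ∘ Y | m.comap Y]) :
    IsAEAdaptedKernel m m' κ (P.map Y) := by
  intro E hE
  refine ⟨fun y => ENNReal.ofReal ((P.map Y)[fun y => (κ y).real E | m] y),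
    stronglyMeasurable_condExp.measurable.ennreal_ofReal.stronglyMeasurable, ?_⟩
  filter_upwards [condExp_measureReal_ae_eq_of_condExp_indicator hm hm' hX hY hκ h hE] with y hy
  rw [hy, ofReal_measureReal]

theorem condExp_comap_sup_comap_of_isAEAdaptedKernel
    (hm : m ≤ mT) (hm' : m' ≤ mU) (hX : Measurable X) (hY : Measurable Y)
    (hκ : HasCondDistrib X Y κ P) (h : IsAEAdaptedKernel m m' κ (P.map Y)) {f : T → ℝ}
    (hf : Integrable f (P.map Y)) :
    P[f ∘ Y | m'.comap X ⊔ m.comap Y] =ᵐ[P] P[f ∘ Y | m.comap Y] := by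
  have hcondExp : StronglyMeasurable[m.comap Y] ((P.map Y)[f | m] ∘ Y) :=
    stronglyMeasurable_condExp.comp_measurable (comap_measurable Y)
  refine Filter.EventuallyEq.trans ?_ (condExp_comp_ae_eq hm hY hf).symm
  refine (ae_eq_condExp_comap_sup_comap ((comap_mono hm').trans hX.comap_le)
    ((comap_mono hm).trans hY.comap_le) (hf.comp_measurable hY)
    (integrable_condExp.comp_measurable hY) (hcondExp.aestronglyMeasurable.mono le_sup_right)
    fun E D hE hD => ?_).symm
  have hE' : MeasurableSet E := hm' E hE
  have hD' : MeasurableSet D := hm D hD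
  have hφf : Integrable ((fun y => (κ y).real E) * f) (P.map Y) := integrable_measureReal_mul hE' hf
  calc ∫ ω in X ⁻¹' E ∩ Y ⁻¹' D, (P.map Y)[f | m] (Y ω) ∂P
    _ = ∫ y in D, (κ y).real E * (P.map Y)[f | m] y ∂(P.map Y) :=
      setIntegral_comp_of_hasCondDistrib hκ hE' hD' integrable_condExp
    _ = ∫ y in D, (P.map Y)[(fun y => (κ y).real E) * f | m] y ∂(P.map Y) :=
      integral_congr_ae (ae_restrict_of_ae (condExp_mul_of_aestronglyMeasurable_left
        (h.aestronglyMeasurable_measureReal hE) hφf hf).symm)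
    _ = ∫ y in D, (κ y).real E * f y ∂(P.map Y) := setIntegral_condExp hm hφf hD
    _ = ∫ ω in X ⁻¹' E ∩ Y ⁻¹' D, f (Y ω) ∂P :=
      (setIntegral_comp_of_hasCondDistrib hκ hE' hD' hf).symm

end ConditionalLaw

section ConditionalLawOfPair

variable {Ω T U V : Type*} {mΩ : MeasurableSpace Ω} {mT : MeasurableSpace T}
  {mU : MeasurableSpace U} {mV : MeasurableSpace V} {P : Measure Ω}
  {X : Ω → U} {Y : Ω → T} {κ : Kernel T U}

theorem hasCondDistrib_condDistrib [IsFiniteMeasure P] [StandardBorelSpace U] [Nonempty U]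
    (hX : AEMeasurable X P) (hY : AEMeasurable Y P) :
    HasCondDistrib X Y (condDistrib X Y P) P :=
  ⟨hY.prodMk hX, (compProd_map_condDistrib hX).symm⟩

theorem hasCondDistrib_fst_snd_map (hX : Measurable X) (hY : Measurable Y)
    (h : HasCondDistrib X Y κ P) :
    HasCondDistrib Prod.fst Prod.snd κ (P.map fun ω => (X ω, Y ω)) := by
  refine ⟨measurable_swap.aemeasurable, ?_⟩
  rw [Measure.map_map measurable_snd (hX.prodMk hY)]
  exact (Measure.map_map measurable_swap (hX.prodMk hY)).trans h.map_eq

theorem map_prodMk_eq_map_swap_of_hasCondDistrib (h : HasCondDistrib X Y κ P) :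
    P.map (fun ω => (X ω, Y ω)) = (P.map Y ⊗ₘ κ).map Prod.swap := by
  rw [← h.map_eq, AEMeasurable.map_map_of_aemeasurable measurable_swap.aemeasurable h.aemeasurable]
  rfl

theorem hasCondDistrib_compProd {ν : Measure T} [SFinite ν] [IsMarkovKernel κ] :
    HasCondDistrib Prod.snd Prod.fst κ (ν ⊗ₘ κ) := by
  refine ⟨aemeasurable_id, ?_⟩
  rw [← Measure.fst, Measure.fst_compProd]
  exact Measure.map_id

theorem map_fst_snd_fst_compProd_prod {ν : Measure T} [SFinite ν]
    {η : Kernel T V} [IsMarkovKernel κ] [IsMarkovKernel η] :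
    (ν ⊗ₘ (κ ×ₖ η)).map (fun p => (p.2.1, p.1)) = (ν ⊗ₘ κ).map Prod.swap := by
  have h := (hasCondDistrib_compProd (ν := ν) (κ := κ ×ₖ η)).fst
  rw [Kernel.fst_prod] at h
  rw [map_prodMk_eq_map_swap_of_hasCondDistrib h, ← Measure.fst, Measure.fst_compProd]

theorem map_snd_snd_fst_compProd_prod {ν : Measure T} [SFinite ν]
    {η : Kernel T V} [IsMarkovKernel κ] [IsMarkovKernel η] :
    (ν ⊗ₘ (κ ×ₖ η)).map (fun p => (p.2.2, p.1)) = (ν ⊗ₘ η).map Prod.swap := by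
  have h := (hasCondDistrib_compProd (ν := ν) (κ := κ ×ₖ η)).snd
  rw [Kernel.snd_prod] at h
  rw [map_prodMk_eq_map_swap_of_hasCondDistrib h, ← Measure.fst, Measure.fst_compProd]

theorem ae_notMem_of_hasCondDistrib [SFinite P] [IsSFiniteKernel κ]
    (h : HasCondDistrib X Y κ P) {B : Set U} (hB : MeasurableSet B) :
    ∀ᵐ ω ∂P, κ (Y ω) B = 0 → X ω ∉ B := by
  have hD : MeasurableSet {y | κ y B = 0} := κ.measurable_coe hB (measurableSet_singleton 0)
  have hnull : (P.map fun ω => (Y ω, X ω)) ({y | κ y B = 0} ×ˢ B) = 0 := by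
    rw [h.map_eq, Measure.compProd_apply_prod hD hB]
    exact (setLIntegral_congr_fun hD fun y hy => hy).trans lintegral_zero
  rw [measure_eq_zero_iff_ae_notMem] at hnull
  filter_upwards [ae_of_ae_map h.aemeasurable hnull] with ω hω hκ hX
  exact hω ⟨hκ, hX⟩

theorem ae_eq_of_hasCondDistrib_of_ae_prod_eq [SFinite P] [CountablySeparated U]
    {X₁ X₂ : Ω → U} {κ₁ κ₂ : Kernel T U} [IsSFiniteKernel κ₁] [IsSFiniteKernel κ₂]
    (h₁ : HasCondDistrib X₁ Y κ₁ P) (h₂ : HasCondDistrib X₂ Y κ₂ P)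
    (hdiag : ∀ᵐ y ∂P.map Y, ∀ᵐ q ∂(κ₁ ×ₖ κ₂) y, q.1 = q.2) : X₁ =ᵐ[P] X₂ := by
  have hmem : ∀ B, MeasurableSet B → ∀ᵐ ω ∂P, X₁ ω ∈ B → X₂ ω ∈ B := by
    intro B hB
    filter_upwards [ae_of_ae_map h₁.aemeasurable_fst hdiag, ae_notMem_of_hasCondDistrib h₁ hB,
      ae_notMem_of_hasCondDistrib h₂ hB.compl] with ω hω hX₁ hX₂ hX₁B
    have hnull : κ₁ (Y ω) B * κ₂ (Y ω) Bᶜ = 0 := by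
      rw [← Kernel.prod_apply_prod, measure_eq_zero_iff_ae_notMem]
      filter_upwards [hω] with q hq hqB
      exact hqB.2 (hq ▸ hqB.1)
    rcases mul_eq_zero.1 hnull with h | h
    · exact absurd hX₁B (hX₁ h)
    · exact not_not.1 (hX₂ h)
  refine Filter.EventuallyEq.of_forall_separating_preimage MeasurableSet fun B hB => ?_
  rw [Filter.eventuallyEq_set]
  filter_upwards [hmem B hB, hmem Bᶜ hB.compl] with ω h h'
  exact ⟨h, not_imp_not.1 h'⟩

end ConditionalLawOfPair

section Compatibility

variable {S1 S2 Ω A : Type} [mS1 : MeasurableSpace S1] [mS2 : MeasurableSpace S2]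
  [MeasurableSpace Ω] {P : Measure Ω} [IsFiniteMeasure P]
  {B1 : A → MeasurableSpace S1} {B2 : A → MeasurableSpace S2} {X X₁ X₂ : Ω → S1} {Y : Ω → S2}
  {κ κ₁ κ₂ : Kernel S2 S1} [IsMarkovKernel κ] [IsMarkovKernel κ₁] [IsMarkovKernel κ₂]

theorem CompatiblePair.isAEAdaptedKernel (h : CompatiblePair P B1 B2 X Y)
    (hB1 : ∀ α, B1 α ≤ mS1) (hB2 : ∀ α, B2 α ≤ mS2) (hX : Measurable X) (hY : Measurable Y)
    (hκ : HasCondDistrib X Y κ P) (α : A) : IsAEAdaptedKernel (B2 α) (B1 α) κ (P.map Y) :=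
  isAEAdaptedKernel_of_condExp_indicator (hB2 α) (hB1 α) hX hY hκ fun D hD =>
    h α (D.indicator 1) (measurable_one.indicator hD) ⟨1, fun y => by
      by_cases hy : y ∈ D <;> simp [hy]⟩

theorem isAEAdaptedKernel_of_compatiblePair_map
    (h : CompatiblePair (P.map fun ω => (X ω, Y ω)) B1 B2 Prod.fst Prod.snd)
    (hB1 : ∀ α, B1 α ≤ mS1) (hB2 : ∀ α, B2 α ≤ mS2) (hX : Measurable X) (hY : Measurable Y)
    (hκ : HasCondDistrib X Y κ P) (α : A) : IsAEAdaptedKernel (B2 α) (B1 α) κ (P.map Y) := by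
  have hadapted := h.isAEAdaptedKernel hB1 hB2 measurable_fst measurable_snd
    (hasCondDistrib_fst_snd_map hX hY hκ) α
  rwa [Measure.map_map measurable_snd (hX.prodMk hY)] at hadapted

theorem jointlyCompatible_of_isAEAdaptedKernel (hB1 : ∀ α, B1 α ≤ mS1) (hB2 : ∀ α, B2 α ≤ mS2)
    (hX₁ : Measurable X₁) (hX₂ : Measurable X₂) (hY : Measurable Y)
    (hκ : HasCondDistrib (fun ω => (X₁ ω, X₂ ω)) Y (κ₁ ×ₖ κ₂) P)
    (hκ₁ : ∀ α, IsAEAdaptedKernel (B2 α) (B1 α) κ₁ (P.map Y))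
    (hκ₂ : ∀ α, IsAEAdaptedKernel (B2 α) (B1 α) κ₂ (P.map Y)) :
    JointlyCompatible P B1 B2 X₁ X₂ Y := by
  intro α f hf ⟨C, hC⟩
  rw [← comap_prodMk]
  exact condExp_comap_sup_comap_of_isAEAdaptedKernel (hB2 α)
    (sup_le_sup (comap_mono (hB1 α)) (comap_mono (hB1 α))) (hX₁.prodMk hX₂) hY hκ
    ((hκ₁ α).prod (hB1 α) (hB1 α) (hκ₂ α))
    (.of_bound hf.aestronglyMeasurable C (.of_forall hC))

theorem jointlyCompatible_compProd_prod {ν : Measure S2} [IsFiniteMeasure ν]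
    (hB1 : ∀ α, B1 α ≤ mS1) (hB2 : ∀ α, B2 α ≤ mS2)
    (hκ₁ : ∀ α, IsAEAdaptedKernel (B2 α) (B1 α) κ₁ ν)
    (hκ₂ : ∀ α, IsAEAdaptedKernel (B2 α) (B1 α) κ₂ ν) :
    JointlyCompatible (ν ⊗ₘ (κ₁ ×ₖ κ₂)) B1 B2 (fun p => p.2.1) (fun p => p.2.2) Prod.fst := by
  have hν : (ν ⊗ₘ (κ₁ ×ₖ κ₂)).map Prod.fst = ν := Measure.fst_compProd _ _
  exact jointlyCompatible_of_isAEAdaptedKernel hB1 hB2 measurable_snd.fst measurable_snd.snd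
    measurable_fst hasCondDistrib_compProd (hν.symm ▸ hκ₁) (hν.symm ▸ hκ₂)

end Compatibility

theorem stmt9_general {S1 S2 : Type} [mS1 : MeasurableSpace S1] [StandardBorelSpace S1]
    [mS2 : MeasurableSpace S2] {A : Type}
    (B1 : A → MeasurableSpace S1) (hB1 : ∀ α, B1 α ≤ mS1)
    (B2 : A → MeasurableSpace S2) (hB2 : ∀ α, B2 α ≤ mS2) (S : Set (Measure (S1 × S2)))
    (hS : ∀ μ ∈ S, CompatiblePair μ B1 B2 (Prod.fst : S1 × S2 → S1) Prod.snd) :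
    (∀ (Ω : Type) (_ : MeasurableSpace Ω) (P : Measure Ω), IsProbabilityMeasure P →
      ∀ (X1 X2 : Ω → S1) (Y : Ω → S2), Measurable X1 → Measurable X2 → Measurable Y →
        P.map (fun ω => (X1 ω, Y ω)) ∈ S → P.map (fun ω => (X2 ω, Y ω)) ∈ S →
        JointlyCompatible P B1 B2 X1 X2 Y →
        X1 =ᵐ[P] X2)
    ↔ (∀ (Ω : Type) (_ : MeasurableSpace Ω) (P : Measure Ω), IsProbabilityMeasure P →
      ∀ (X1 X2 : Ω → S1) (Y : Ω → S2), Measurable X1 → Measurable X2 → Measurable Y →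
        P.map (fun ω => (X1 ω, Y ω)) ∈ S → P.map (fun ω => (X2 ω, Y ω)) ∈ S →
        X1 =ᵐ[P] X2) := by
  refine ⟨fun hunique Ω mΩ P hP X1 X2 Y hX1 hX2 hY hS1 hS2 => ?_,
    fun hunique Ω mΩ P hP X1 X2 Y hX1 hX2 hY hS1 hS2 _ =>
      hunique Ω mΩ P hP X1 X2 Y hX1 hX2 hY hS1 hS2⟩
  have : Nonempty S1 := (nonempty_of_isProbabilityMeasure P).map X1
  have : IsProbabilityMeasure (P.map Y) := Measure.isProbabilityMeasure_map hY.aemeasurable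
  have hκ1 := hasCondDistrib_condDistrib hX1.aemeasurable hY.aemeasurable (P := P)
  have hκ2 := hasCondDistrib_condDistrib hX2.aemeasurable hY.aemeasurable (P := P)
  have hκ1_adapted := isAEAdaptedKernel_of_compatiblePair_map (hS _ hS1) hB1 hB2 hX1 hY hκ1
  have hκ2_adapted := isAEAdaptedKernel_of_compatiblePair_map (hS _ hS2) hB1 hB2 hX2 hY hκ2
  rw [map_prodMk_eq_map_swap_of_hasCondDistrib hκ1,
    ← map_fst_snd_fst_compProd_prod (η := condDistrib X2 Y P)] at hS1
  rw [map_prodMk_eq_map_swap_of_hasCondDistrib hκ2,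
    ← map_snd_snd_fst_compProd_prod (κ := condDistrib X1 Y P)] at hS2
  have hdiag := hunique _ _ _ inferInstance _ _ _ measurable_snd.fst measurable_snd.snd
    measurable_fst hS1 hS2 (jointlyCompatible_compProd_prod hB1 hB2 hκ1_adapted hκ2_adapted)
  exact ae_eq_of_hasCondDistrib_of_ae_prod_eq hκ1 hκ2 (Measure.ae_ae_of_ae_compProd hdiag)

/-- Lemma 2.10 of Kurtz: pointwise uniqueness for jointly `C`-compatible solutions in
`S_{Γ,C,ν}` is equivalent to pointwise uniqueness in `S_{Γ,C,ν}`. -/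
theorem stmt9
    {S1 S2 : Type} [mS1 : MeasurableSpace S1] [TopologicalSpace S1] [PolishSpace S1] [BorelSpace S1]
    [mS2 : MeasurableSpace S2] [TopologicalSpace S2] [PolishSpace S2] [BorelSpace S2]
    (ν : Measure S2) [IsProbabilityMeasure ν]
    {A : Type}
    (B1 : A → MeasurableSpace S1) (hB1 : ∀ α, B1 α ≤ mS1)
    (B2 : A → MeasurableSpace S2) (hB2 : ∀ α, B2 α ≤ mS2)
    (S : Set (Measure (S1 × S2)))
    -- every member of S is a joint solution measure: a probability measure with
    -- S2-marginal ν whose canonical pair (fst, snd) is C-compatible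
    (hS : ∀ μ ∈ S, IsProbabilityMeasure μ ∧ μ.map Prod.snd = ν ∧
      CompatiblePair μ B1 B2 (Prod.fst : S1 × S2 → S1) (Prod.snd : S1 × S2 → S2)) :
    (∀ (Ω : Type) (mΩ : MeasurableSpace Ω) (P : Measure Ω), IsProbabilityMeasure P →
      ∀ (X1 X2 : Ω → S1) (Y : Ω → S2), Measurable X1 → Measurable X2 → Measurable Y →
        P.map (fun ω => (X1 ω, Y ω)) ∈ S → P.map (fun ω => (X2 ω, Y ω)) ∈ S →
        JointlyCompatible P B1 B2 X1 X2 Y →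
        X1 =ᵐ[P] X2)
    ↔ (∀ (Ω : Type) (mΩ : MeasurableSpace Ω) (P : Measure Ω), IsProbabilityMeasure P →
      ∀ (X1 X2 : Ω → S1) (Y : Ω → S2), Measurable X1 → Measurable X2 → Measurable Y →
        P.map (fun ω => (X1 ω, Y ω)) ∈ S → P.map (fun ω => (X2 ω, Y ω)) ∈ S →
        X1 =ᵐ[P] X2) :=
  stmt9_general B1 hB1 B2 hB2 S fun μ hμ => (hS μ hμ).2.2
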